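/- Let (g_1, g_2, g_3, g_4) be a 4-tuple of order-2 elements of the alternating group A6 on 6 letters. Then either there exists a tuple (h_1, h_2, h_3, h_4) Hurwitz-equivalent to (g_1, g_2, g_3, g_4) with two entries h_i ≠ or = h_j (i ≠ j) having the same set of fixed points, or there exists a permutation s in S6 such that (g_1, g_2, g_3, g_4) is Hurwitz-equivalent to (s^{-1}·(1 2)(3 4)·s, s^{-1}·(1 2)(3 5)·s, s^{-1}·(1 6)(3 4)·s, s^{-1}·(1 6)(4 5)·s). -/

import Mathlib

/-- The `i`-th Hurwitz move on `k`-tuples of elements of a group `G`: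
`(g₁,…,gₖ) ↦ (g₁,…,g_{i-1}, g_{i+1}, g_{i+1}⁻¹ g_i g_{i+1}, g_{i+2},…,gₖ)`. -/
def HurwitzMove {G : Type*} [Group G] {k : ℕ} (g h : Fin k → G) : Prop :=
  ∃ i : ℕ, ∃ hi : i + 1 < k,
    h ⟨i, Nat.lt_of_succ_lt hi⟩ = g ⟨i + 1, hi⟩ ∧
    h ⟨i + 1, hi⟩ = (g ⟨i + 1, hi⟩)⁻¹ * g ⟨i, Nat.lt_of_succ_lt hi⟩ * g ⟨i + 1, hi⟩ ∧
    ∀ j : Fin k, (j : ℕ) ≠ i → (j : ℕ) ≠ i + 1 → h j = g j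

/-- Hurwitz equivalence: the equivalence relation generated by the Hurwitz moves. -/
def HurwitzEquiv {G : Type*} [Group G] {k : ℕ} (g h : Fin k → G) : Prop :=
  Relation.EqvGen HurwitzMove g h

/-- The Nielsen class `Ni(A₆, C_{2×2}^k)`: `k`-tuples of order-2 elements of `A₆`
(products of two disjoint transpositions) with product `1` generating `A₆`. -/
def NielsenSet (k : ℕ) : Set (Fin k → Equiv.Perm (Fin 6)) :=
  {g | (∀ i, g i ∈ alternatingGroup (Fin 6)) ∧ (∀ i, orderOf (g i) = 2) ∧
       (List.ofFn g).prod = 1 ∧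
       Subgroup.closure (Set.range g) = alternatingGroup (Fin 6)}

/-- One step of the absolute equivalence: a Hurwitz move, or simultaneous
conjugation of all entries by a single element of `S₆`. -/
def AbsRel (k : ℕ) (g h : Fin k → Equiv.Perm (Fin 6)) : Prop :=
  HurwitzMove g h ∨ ∃ s : Equiv.Perm (Fin 6), h = fun i => s⁻¹ * g i * s

/-- One step of the inner equivalence: a Hurwitz move, or simultaneous
conjugation of all entries by a single element of `A₆`. -/
def InnerRel (k : ℕ) (g h : Fin k → Equiv.Perm (Fin 6)) : Prop :=
  HurwitzMove g h ∨
    ∃ s ∈ alternatingGroup (Fin 6), h = fun i => s⁻¹ * g i * s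

/-- The set of fixed points of a permutation. -/
def FixedPts {n : ℕ} (g : Equiv.Perm (Fin n)) : Set (Fin n) := {x | g x = x}

/-!
Call a tuple collision-free if no tuple Hurwitz-equivalent to it has two entries with the same fixed
points. This property is invariant under Hurwitz moves and simultaneous conjugation, and it passes
to the tail `(g₂, …, gₖ)`, since Hurwitz moves of the tail are Hurwitz moves of the whole tuple. The
collision-free `k`-tuples of double transpositions are therefore classified, up to moves and
conjugation, one entry at a time: put each of the 45 double transpositions in front of each
representative of length `k`, and search among the tuples a few Hurwitz moves away for a collision
or for a conjugate of a representative of length `k + 1`. For `k = 1, 2, 3, 4` this leaves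
1, 5, 9 and 1 representatives, the last one being the exceptional tuple.
-/

open Equiv Equiv.Perm

section Hurwitz

variable {G H : Type*} [Group G] [Group H] {k m : ℕ} {g h l : Fin k → G}

theorem HurwitzMove.map (f : G →* H) (hgh : HurwitzMove g h) : HurwitzMove (f ∘ g) (f ∘ h) := by
  obtain ⟨i, hi, hfst, hsnd, hrest⟩ := hgh
  refine ⟨i, hi, congrArg f hfst, ?_, fun j hj hj' => congrArg f (hrest j hj hj')⟩
  simp only [Function.comp_apply, hsnd, map_mul, map_inv]

theorem HurwitzMove.cons (x : G) (hgh : HurwitzMove g h) :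
    HurwitzMove (Fin.cons x g : Fin (k + 1) → G) (Fin.cons x h) := by
  obtain ⟨i, hi, hfst, hsnd, hrest⟩ := hgh
  refine ⟨i + 1, by lia, hfst, hsnd, Fin.cases (fun _ _ => rfl) fun j hj hj' => ?_⟩
  exact hrest j (by simpa using hj) (by simpa using hj')

theorem hurwitzMove_cons_cons (x y : G) (g : Fin k → G) :
    HurwitzMove (Fin.cons x (Fin.cons y g) : Fin (k + 2) → G)
      (Fin.cons y (Fin.cons (y⁻¹ * x * y) g)) := by
  refine ⟨0, by lia, rfl, rfl, fun j hj hj' => ?_⟩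
  induction j using Fin.cases with
  | zero => exact absurd rfl hj
  | succ j =>
    induction j using Fin.cases with
    | zero => exact absurd rfl hj'
    | succ j => rfl

theorem HurwitzEquiv.lift {f : (Fin k → G) → (Fin m → H)}
    (hf : ∀ g h, HurwitzMove g h → HurwitzMove (f g) (f h)) (hgh : HurwitzEquiv g h) :
    HurwitzEquiv (f g) (f h) := by
  induction hgh with
  | rel _ _ hmove => exact .rel _ _ (hf _ _ hmove)
  | refl _ => exact .refl _
  | symm _ _ _ ih => exact .symm _ _ ih
  | trans _ _ _ _ _ ih ih' => exact .trans _ _ _ ih ih'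

theorem HurwitzEquiv.map (f : G →* H) : HurwitzEquiv g h → HurwitzEquiv (f ∘ g) (f ∘ h) :=
  HurwitzEquiv.lift fun _ _ => HurwitzMove.map f

theorem HurwitzEquiv.cons (x : G) :
    HurwitzEquiv g h → HurwitzEquiv (Fin.cons x g : Fin (k + 1) → G) (Fin.cons x h) :=
  HurwitzEquiv.lift fun _ _ => HurwitzMove.cons x

/-- Hurwitz equivalence up to simultaneous conjugation of the entries. -/
def HurwitzConj (g h : Fin k → G) : Prop :=
  ∃ s : G, HurwitzEquiv g (MulAut.conj s ∘ h)

theorem HurwitzEquiv.hurwitzConj (hgh : HurwitzEquiv g h) : HurwitzConj g h :=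
  ⟨1, by simpa [Function.comp_def] using hgh⟩

theorem hurwitzConj_conj (s : G) (g : Fin k → G) : HurwitzConj g (MulAut.conj s ∘ g) := by
  refine ⟨s⁻¹, ?_⟩
  have hinv : MulAut.conj s⁻¹ ∘ MulAut.conj s ∘ g = g := by
    ext i
    simp [mul_assoc]
  rw [hinv]
  exact .refl g

theorem HurwitzConj.trans (hgh : HurwitzConj g h) (hhl : HurwitzConj h l) : HurwitzConj g l := by
  obtain ⟨s, hs⟩ := hgh
  obtain ⟨t, ht⟩ := hhl
  refine ⟨s * t, hs.trans _ _ _ ?_⟩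
  rw [map_mul]
  exact ht.map (MulAut.conj s).toMonoidHom

theorem HurwitzConj.cons (x : G) (hgh : HurwitzConj g h) :
    ∃ s : G, HurwitzConj (Fin.cons x g : Fin (k + 1) → G) (Fin.cons (MulAut.conj s x) h) := by
  obtain ⟨s, hs⟩ := hgh
  refine ⟨s⁻¹, s, ?_⟩
  convert hs.cons x using 1
  ext i
  induction i using Fin.cases <;> simp [mul_assoc]

end Hurwitz

section Reduction

variable {n k : ℕ} {g h : Fin k → Perm (Fin n)}

/-- Two entries of the tuple have the same set of fixed points. -/
def Collides (g : Fin k → Perm (Fin n)) : Prop :=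
  ¬ Function.Injective fun i => FixedPts (g i)

theorem collides_conj_iff (s : Perm (Fin n)) : Collides (MulAut.conj s ∘ g) ↔ Collides g := by
  have fixedPts_conj (p : Perm (Fin n)) : FixedPts (MulAut.conj s p) = ⇑s⁻¹ ⁻¹' FixedPts p := by
    ext x
    simp [FixedPts, Perm.mul_apply, ← Perm.eq_inv_iff_eq, eq_comm]
  have : Function.Injective (Set.preimage ⇑s⁻¹) :=
    Set.preimage_injective.2 (s⁻¹).surjective
  simp only [Collides, Function.comp_apply, fixedPts_conj]
  exact not_congr (this.of_comp_iff _)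

theorem Collides.cons (x : Perm (Fin n)) (hg : Collides g) :
    Collides (Fin.cons x g : Fin (k + 1) → Perm (Fin n)) :=
  fun hinj => hg (hinj.comp (Fin.succ_injective k))

/-- Up to Hurwitz moves and simultaneous conjugation, `g` has two entries with the same fixed
points or belongs to `R`. -/
def ReducesTo (R : Set (Fin k → Perm (Fin n))) (g : Fin k → Perm (Fin n)) : Prop :=
  ∃ h, HurwitzConj g h ∧ (Collides h ∨ h ∈ R)

theorem HurwitzConj.reducesTo {R : Set (Fin k → Perm (Fin n))} (hgh : HurwitzConj g h)
    (hh : ReducesTo R h) : ReducesTo R g :=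
  let ⟨l, hhl, hl⟩ := hh
  ⟨l, hgh.trans hhl, hl⟩

theorem reducesTo_succ {C : Set (Perm (Fin n))} {R : Set (Fin k → Perm (Fin n))}
    {R' : Set (Fin (k + 1) → Perm (Fin n))} (hC : ∀ s, ∀ x ∈ C, MulAut.conj s x ∈ C)
    (hR : ∀ g : Fin k → Perm (Fin n), (∀ i, g i ∈ C) → ReducesTo R g)
    (hR' : ∀ x ∈ C, ∀ r ∈ R, ReducesTo R' (Fin.cons x r : Fin (k + 1) → Perm (Fin n)))
    (g : Fin (k + 1) → Perm (Fin n)) (hg : ∀ i, g i ∈ C) : ReducesTo R' g := by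
  obtain ⟨r, htail, hr⟩ := hR (Fin.tail g) fun i => hg i.succ
  obtain ⟨s, hs⟩ := htail.cons (g 0)
  rw [Fin.cons_self_tail] at hs
  obtain hcol | hr := hr
  · exact ⟨_, hs, .inl (hcol.cons _)⟩
  · exact hs.reducesTo (hR' _ (hC s _ (hg 0)) r hr)

end Reduction

theorem cycleType_eq_two_two_of_mem_alternatingGroup {α : Type*} [Fintype α] [DecidableEq α]
    {p : Perm α} (hα : Fintype.card α < 8) (hp : p ∈ alternatingGroup α) (hord : orderOf p = 2) :
    p.cycleType = {2, 2} := by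
  obtain ⟨m, hm⟩ := cycleType_prime_order (hord ▸ Nat.prime_two)
  rw [hord] at hm
  have hcard : 2 + m * 2 < 8 := by
    simpa [hm] using (sum_cycleType_le p).trans_lt hα
  have heven : Even (m + 1) := by
    have hsign := mem_alternatingGroup.1 hp
    rw [sign_of_cycleType, neg_one_pow_eq_one_iff_even (by decide), hm] at hsign
    simpa [parity_simps] using hsign
  obtain rfl : m = 1 := by
    rw [Nat.even_iff] at heven
    lia
  exact hm

theorem mem_conjugatesOf_of_orderOf_eq_two {p : Perm (Fin 6)}
    (hp : p ∈ alternatingGroup (Fin 6)) (hord : orderOf p = 2) :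
    p ∈ conjugatesOf (swap 0 1 * swap 2 3 : Perm (Fin 6)) := by
  have hbase : orderOf (swap 0 1 * swap 2 3 : Perm (Fin 6)) = 2 :=
    orderOf_eq_prime (by decide) (by decide)
  refine isConj_iff_cycleType_eq.2 ?_
  have heven : (swap 0 1 * swap 2 3 : Perm (Fin 6)) ∈ alternatingGroup (Fin 6) :=
    mem_alternatingGroup.2 (by decide)
  rw [cycleType_eq_two_two_of_mem_alternatingGroup (by simp) heven hbase,
    cycleType_eq_two_two_of_mem_alternatingGroup (by simp) hp hord]

section Search

variable {β : Type*} {next : β → List β} {P : β → Bool}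

/-- Breadth-first search: some vertex satisfying `P` can be reached from `L` in at most `n` steps
along `next`. -/
def reaches (next : β → List β) (P : β → Bool) : ℕ → List β → Bool
  | 0, L => L.any P
  | n + 1, L => L.any P || reaches next P n (L.flatMap next)

theorem exists_reflTransGen_of_reaches {n : ℕ} {L : List β} (h : reaches next P n L) :
    ∃ a ∈ L, ∃ b, Relation.ReflTransGen (fun a b => b ∈ next a) a b ∧ P b := by
  induction n generalizing L with
  | zero =>
    obtain ⟨a, ha, hPa⟩ := List.any_eq_true.1 h
    exact ⟨a, ha, a, .refl, hPa⟩
  | succ n ih =>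
    obtain h | h := Bool.or_eq_true_iff.1 h
    · obtain ⟨a, ha, hPa⟩ := List.any_eq_true.1 h
      exact ⟨a, ha, a, .refl, hPa⟩
    · obtain ⟨a', ha', b, hab, hPb⟩ := ih h
      obtain ⟨a, ha, haa'⟩ := List.mem_flatMap.1 ha'
      exact ⟨a, ha, b, hab.head haa', hPb⟩

end Search

/-- Points `a, b, c, d` standing for the permutation `(a b)(c d)`. -/
structure DoubleSwap (α : Type*) where
  (a b c d : α)
deriving DecidableEq

namespace DoubleSwap

variable {α : Type*}

section Conjugation

variable [DecidableEq α]

/-- The permutation `(a b)(c d)`. -/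
def toPerm (x : DoubleSwap α) : Perm α :=
  swap x.a x.b * swap x.c x.d

/-- The notation for `s * (a b)(c d) * s⁻¹` obtained by relabelling the points. -/
def conj (s : Perm α) (x : DoubleSwap α) : DoubleSwap α :=
  ⟨s x.a, s x.b, s x.c, s x.d⟩

theorem toPerm_conj (s : Perm α) (x : DoubleSwap α) :
    (x.conj s).toPerm = MulAut.conj s x.toPerm := by
  simp only [toPerm, conj, swap_apply_apply, ← MulAut.conj_apply, map_mul]

end Conjugation

section Normalization

variable [LinearOrder α]

/-- Writes the first transposition in increasing order. -/
def sortLeft : DoubleSwap α → DoubleSwap α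
  | ⟨a, b, c, d⟩ => if a < b then ⟨a, b, c, d⟩ else ⟨b, a, c, d⟩

/-- Writes the second transposition in increasing order. -/
def sortRight : DoubleSwap α → DoubleSwap α
  | ⟨a, b, c, d⟩ => if c < d then ⟨a, b, c, d⟩ else ⟨a, b, d, c⟩

/-- Writes disjoint transpositions in the order of their first points. -/
def sortPairs : DoubleSwap α → DoubleSwap α
  | ⟨a, b, c, d⟩ => if c < a ∧ a ≠ d ∧ b ≠ c ∧ b ≠ d then ⟨c, d, a, b⟩ else ⟨a, b, c, d⟩

/-- The standard notation for a product of two disjoint transpositions. -/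
def normalize (x : DoubleSwap α) : DoubleSwap α :=
  x.sortLeft.sortRight.sortPairs

theorem toPerm_sortLeft (x : DoubleSwap α) : x.sortLeft.toPerm = x.toPerm := by
  simp only [sortLeft]
  split_ifs
  · rfl
  · simp only [toPerm, swap_comm]

theorem toPerm_sortRight (x : DoubleSwap α) : x.sortRight.toPerm = x.toPerm := by
  simp only [sortRight]
  split_ifs
  · rfl
  · simp only [toPerm, swap_comm]

theorem toPerm_sortPairs (x : DoubleSwap α) : x.sortPairs.toPerm = x.toPerm := by
  obtain ⟨a, b, c, d⟩ := x
  simp only [sortPairs]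
  split_ifs with h
  · obtain ⟨hca, had, hbc, hbd⟩ := h
    by_cases hab : a = b
    · simp [toPerm, hab, ← Perm.one_def]
    by_cases hcd : c = d
    · simp [toPerm, hcd, ← Perm.one_def]
    have hnodup : [c, d, a, b].Nodup := by grind
    exact (disjoint_swap_swap hnodup).commute
  · rfl

theorem toPerm_normalize (x : DoubleSwap α) : x.normalize.toPerm = x.toPerm := by
  rw [normalize, toPerm_sortPairs, toPerm_sortRight, toPerm_sortLeft]

end Normalization

/-- `f a`, with `a` replaced by a numeral before `f` is unfolded: this keeps the terms met in kernel
computations small. -/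
def force {β : Type*} (a : Fin 6) (f : Fin 6 → β) : β :=
  match a with
  | 0 => f 0 | 1 => f 1 | 2 => f 2 | 3 => f 3 | 4 => f 4 | 5 => f 5

theorem force_eq {β : Type*} (a : Fin 6) (f : Fin 6 → β) : force a f = f a := by
  fin_cases a <;> rfl

/-- Conjugation by `s`, in standard notation with numerals as points. -/
def conjNormal (s : Perm (Fin 6)) (x : DoubleSwap (Fin 6)) : DoubleSwap (Fin 6) :=
  force (s x.a) fun a => force (s x.b) fun b => force (s x.c) fun c => force (s x.d) fun d =>
    normalize ⟨a, b, c, d⟩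

theorem toPerm_conjNormal (s : Perm (Fin 6)) (x : DoubleSwap (Fin 6)) :
    (x.conjNormal s).toPerm = MulAut.conj s x.toPerm := by
  simp only [conjNormal, force_eq, toPerm_normalize]
  exact toPerm_conj s x

/-- The list `0, …, 5` with numerals as entries. -/
def letters : List (Fin 6) := [0, 1, 2, 3, 4, 5]

/-- The 45 double transpositions of six letters, in standard notation. -/
def all : List (DoubleSwap (Fin 6)) := do
  let a ← letters
  let b ← letters
  let c ← letters
  let d ← letters
  if a < b ∧ a < c ∧ c < d ∧ b ≠ c ∧ b ≠ d then [⟨a, b, c, d⟩] else []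

theorem normalize_mem_all : ∀ a b c d : Fin 6, [a, b, c, d].Nodup →
    normalize ⟨a, b, c, d⟩ ∈ all := by
  decide +kernel

theorem exists_mem_all_toPerm_eq {p : Perm (Fin 6)}
    (hp : p ∈ conjugatesOf (swap 0 1 * swap 2 3 : Perm (Fin 6))) : ∃ x ∈ all, x.toPerm = p := by
  obtain ⟨s, rfl⟩ := isConj_iff.1 hp
  let x : DoubleSwap (Fin 6) := ⟨0, 1, 2, 3⟩
  refine ⟨(x.conj s).normalize, normalize_mem_all _ _ _ _ ?_, ?_⟩
  · exact List.Nodup.map (l := [0, 1, 2, 3]) s.injective (by decide)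
  · rw [toPerm_normalize, toPerm_conj]
    rfl

/-- A tuple of double transpositions of six letters, as a list. -/
abbrev Word := List (DoubleSwap (Fin 6))

/-- The tuple `g` is the one written by `w`. -/
def Encodes {k : ℕ} (w : Word) (g : Fin k → Perm (Fin 6)) : Prop :=
  w.map toPerm = List.ofFn g

/-- The tuples written by the words of a list. -/
def tuples (k : ℕ) (R : List Word) : Set (Fin k → Perm (Fin 6)) :=
  {g | ∃ r ∈ R, Encodes r g}

section Encoding

variable {k : ℕ} {g : Fin k → Perm (Fin 6)} {v w : Word}

theorem Encodes.exists_eq_cons {x : DoubleSwap (Fin 6)} {g : Fin (k + 1) → Perm (Fin 6)}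
    (h : Encodes (x :: w) g) : ∃ g', g = Fin.cons x.toPerm g' ∧ Encodes w g' := by
  rw [Encodes, List.map_cons, List.ofFn_succ, List.cons.injEq] at h
  exact ⟨Fin.tail g, h.1 ▸ (Fin.cons_self_tail g).symm, h.2⟩

theorem not_encodes_cons_zero {x : DoubleSwap (Fin 6)} {g : Fin 0 → Perm (Fin 6)} :
    ¬ Encodes (x :: w) g := by
  simp [Encodes]

theorem Encodes.cons (x : DoubleSwap (Fin 6)) (h : Encodes w g) :
    Encodes (x :: w) (Fin.cons x.toPerm g : Fin (k + 1) → Perm (Fin 6)) :=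
  (congrArg (x.toPerm :: ·) h).trans (List.ofFn_cons _ _).symm

theorem encodes_map_conjNormal_iff (s : Perm (Fin 6)) :
    Encodes (w.map (conjNormal s)) (MulAut.conj s ∘ g) ↔ Encodes w g := by
  have hmap : (w.map (conjNormal s)).map toPerm = (w.map toPerm).map (MulAut.conj s) := by
    simp only [List.map_map, Function.comp_def, toPerm_conjNormal]
  rw [Encodes, hmap, ← List.map_ofFn]
  exact (MulAut.conj s).injective.list_map.eq_iff

/-- The words obtained from a word by one Hurwitz move. -/
def moves : Word → List Word
  | x :: y :: w =>
    match x.conjNormal y.toPerm⁻¹ with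
    | ⟨a, b, c, d⟩ => (y :: ⟨a, b, c, d⟩ :: w) :: (moves (y :: w)).map (x :: ·)
  | _ => []

theorem moves_cons_cons (x y : DoubleSwap (Fin 6)) (w : Word) :
    moves (x :: y :: w) =
      (y :: x.conjNormal y.toPerm⁻¹ :: w) :: (moves (y :: w)).map (x :: ·) :=
  rfl

theorem exists_hurwitzMove_of_mem_moves (hv : v ∈ moves w) (hw : Encodes w g) :
    ∃ h, HurwitzMove g h ∧ Encodes v h := by
  induction w generalizing k g v with
  | nil => simp [moves] at hv
  | cons x w ih =>
    match w, k with
    | [], _ => simp [moves] at hv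
    | _ :: _, 0 => exact (not_encodes_cons_zero hw).elim
    | y :: w, k + 1 =>
      obtain ⟨g, rfl, hyw⟩ := hw.exists_eq_cons
      rw [moves_cons_cons] at hv
      obtain rfl | hv := List.mem_cons.1 hv
      · match k with
        | 0 => exact (not_encodes_cons_zero hyw).elim
        | k + 1 =>
          obtain ⟨g, rfl, htail⟩ := hyw.exists_eq_cons
          refine ⟨_, hurwitzMove_cons_cons x.toPerm y.toPerm g, ?_⟩
          rw [← MulAut.conj_inv_apply, ← map_inv, ← toPerm_conjNormal]
          exact (htail.cons _).cons y
      · obtain ⟨u, hu, rfl⟩ := List.mem_map.1 hv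
        obtain ⟨h, hgh, hh⟩ := ih hu hyw
        exact ⟨Fin.cons x.toPerm h, hgh.cons x.toPerm, hh.cons x⟩

theorem exists_hurwitzEquiv_of_reflTransGen
    (hwv : Relation.ReflTransGen (fun w v => v ∈ moves w) w v) (hw : Encodes w g) :
    ∃ h, HurwitzEquiv g h ∧ Encodes v h := by
  induction hwv with
  | refl => exact ⟨g, .refl _, hw⟩
  | tail _ hmove ih =>
    obtain ⟨h, hgh, hh⟩ := ih
    obtain ⟨l, hhl, hl⟩ := exists_hurwitzMove_of_mem_moves hmove hh
    exact ⟨l, hgh.trans _ _ _ (.rel _ _ hhl), hl⟩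

theorem exists_hurwitzEquiv_of_reaches {P : Word → Bool} {n : ℕ} (h : reaches moves P n [w])
    (hw : Encodes w g) : ∃ v h, P v ∧ HurwitzEquiv g h ∧ Encodes v h := by
  obtain ⟨_, hmem, v, hwv, hPv⟩ := exists_reflTransGen_of_reaches h
  obtain rfl := List.mem_singleton.1 hmem
  obtain ⟨h, hgh, hv⟩ := exists_hurwitzEquiv_of_reflTransGen hwv hw
  exact ⟨v, h, hPv, hgh, hv⟩

/-- The fixed points of a double transposition. -/
def fixedLetters (x : DoubleSwap (Fin 6)) : List (Fin 6) :=
  letters.filter fun p => x.toPerm p = p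

theorem setOf_mem_fixedLetters (x : DoubleSwap (Fin 6)) :
    {p | p ∈ x.fixedLetters} = FixedPts x.toPerm := by
  have mem_letters : ∀ p : Fin 6, p ∈ letters := by decide
  ext p
  simp [fixedLetters, FixedPts, mem_letters]

theorem Encodes.collides (hw : Encodes w g) (hcol : ¬ (w.map fixedLetters).Nodup) :
    Collides g := by
  refine fun hinj => hcol (List.Nodup.of_map (fun L : List (Fin 6) => {p | p ∈ L}) ?_)
  have : w.map (FixedPts ∘ toPerm) = List.ofFn (FixedPts ∘ g) := by
    rw [← List.map_map, hw, List.map_ofFn]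
  simpa [Function.comp_def, setOf_mem_fixedLetters] using this ▸ List.nodup_ofFn.2 hinj

/-- A permutation conjugating `(a b)(c d)` to `(0 1)(2 3)`. -/
def align (x : DoubleSwap (Fin 6)) : Perm (Fin 6) :=
  [(0, x.a), (1, x.b), (2, x.c), (3, x.d)].foldl (fun s p => swap p.1 (s p.2) * s) 1

/-- The centralizer of `(0 1)(2 3)`. -/
def baseCentralizer : List (Perm (Fin 6)) := do
  let p ← [1, swap 0 1]
  let q ← [1, swap 2 3]
  let r ← [1, swap 4 5]
  let s ← [1, swap 0 2 * swap 1 3]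
  return p * q * r * s

/-- The word `w` is conjugate to a member of `R`. The test is complete if all members of `R` start
with `(0 1)(2 3)`: the conjugating element is then `x.align`, for `x` the first entry of `w`, up to
the centralizer of `(0 1)(2 3)`. -/
def isConjToMem (R : List Word) : Word → Bool
  | [] => false
  | x :: w => (x :: w).map (conjNormal x.align) ∈
      R.flatMap fun r => baseCentralizer.map fun c => r.map (conjNormal c)

theorem exists_hurwitzConj_of_isConjToMem {R : List Word} (h : isConjToMem R w)
    (hw : Encodes w g) : ∃ r ∈ tuples k R, HurwitzConj g r := by
  match w with
  | x :: w =>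
    obtain ⟨r, hr, c, -, hrc⟩ : ∃ r ∈ R, ∃ c ∈ baseCentralizer,
        r.map (conjNormal c) = (x :: w).map (conjNormal x.align) := by
      simpa only [List.mem_flatMap, List.mem_map] using of_decide_eq_true h
    have hconj : MulAut.conj c ∘ MulAut.conj (c⁻¹ * x.align) ∘ g = MulAut.conj x.align ∘ g := by
      simp [← Function.comp_assoc, ← MulAut.coe_mul, ← map_mul]
    refine ⟨MulAut.conj (c⁻¹ * x.align) ∘ g, ⟨r, hr, ?_⟩, hurwitzConj_conj _ g⟩
    rw [← encodes_map_conjNormal_iff c, hrc, hconj]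
    exact (encodes_map_conjNormal_iff _).2 hw

/-- By at most five Hurwitz moves, the word `w` acquires two entries with the same fixed points, or
becomes conjugate to a member of `R`. -/
def reduces (R : List Word) (w : Word) : Bool :=
  reaches moves (fun v => ¬ (v.map fixedLetters).Nodup) 5 [w] ||
    reaches moves (isConjToMem R) 5 [w]

theorem reducesTo_of_reduces {R : List Word} (h : reduces R w) (hw : Encodes w g) :
    ReducesTo (tuples k R) g := by
  obtain h | h := Bool.or_eq_true_iff.1 h
  · obtain ⟨v, h, hcol, hgh, hv⟩ := exists_hurwitzEquiv_of_reaches h hw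
    exact ⟨h, hgh.hurwitzConj, .inl (hv.collides (of_decide_eq_true hcol))⟩
  · obtain ⟨v, h, hmem, hgh, hv⟩ := exists_hurwitzEquiv_of_reaches h hw
    obtain ⟨r, hr, hhr⟩ := exists_hurwitzConj_of_isConjToMem hmem hv
    exact ⟨r, hgh.hurwitzConj.trans hhr, .inr hr⟩

end Encoding

/-- Representatives of the `k`-tuples of double transpositions, `k ≤ 4`, that never acquire two
entries with the same fixed points, up to Hurwitz moves and simultaneous conjugation. -/
def reps : ℕ → List Word
  | 0 => [[]]
  | 1 => [[⟨0, 1, 2, 3⟩]]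
  | 2 => [
   [⟨0, 1, 2, 3⟩, ⟨2, 3, 4, 5⟩],
   [⟨0, 1, 2, 3⟩, ⟨1, 2, 4, 5⟩],
   [⟨0, 1, 2, 3⟩, ⟨0, 5, 1, 2⟩],
   [⟨0, 1, 2, 3⟩, ⟨0, 4, 2, 5⟩],
   [⟨0, 1, 2, 3⟩, ⟨0, 5, 2, 3⟩]]
  | 3 => [
   [⟨0, 1, 2, 3⟩, ⟨0, 5, 2, 3⟩, ⟨0, 4, 2, 3⟩],
   [⟨0, 1, 2, 3⟩, ⟨0, 5, 1, 2⟩, ⟨1, 5, 2, 4⟩],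
   [⟨0, 1, 2, 3⟩, ⟨0, 5, 1, 2⟩, ⟨0, 1, 4, 5⟩],
   [⟨0, 1, 2, 3⟩, ⟨0, 4, 1, 5⟩, ⟨1, 5, 2, 3⟩],
   [⟨0, 1, 2, 3⟩, ⟨2, 3, 4, 5⟩, ⟨0, 1, 4, 5⟩],
   [⟨0, 1, 2, 3⟩, ⟨0, 5, 1, 2⟩, ⟨0, 2, 4, 5⟩],
   [⟨0, 1, 2, 3⟩, ⟨0, 5, 1, 2⟩, ⟨0, 4, 1, 5⟩],
   [⟨0, 1, 2, 3⟩, ⟨0, 5, 1, 2⟩, ⟨0, 1, 2, 4⟩],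
   [⟨0, 1, 2, 3⟩, ⟨0, 5, 2, 3⟩, ⟨0, 1, 2, 4⟩]]
  | _ => [[⟨0, 1, 2, 3⟩, ⟨0, 1, 2, 4⟩, ⟨0, 5, 2, 3⟩, ⟨0, 5, 3, 4⟩]]

theorem reduces_cons_reps :
    ∀ k < 4, ∀ r ∈ reps k, ∀ x ∈ all, reduces (reps (k + 1)) (x :: r) = true := by
  decide +kernel

theorem reducesTo_reps : ∀ k ≤ 4, ∀ g : Fin k → Perm (Fin 6),
    (∀ i, g i ∈ conjugatesOf (swap 0 1 * swap 2 3)) → ReducesTo (tuples k (reps k)) g := by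
  intro k hk
  induction k with
  | zero =>
    have hmem (g : Fin 0 → Perm (Fin 6)) : g ∈ tuples 0 (reps 0) :=
      ⟨[], List.mem_singleton_self _, List.ofFn_zero.symm⟩
    exact fun g _ => ⟨g, HurwitzEquiv.hurwitzConj (.refl g), .inr (hmem g)⟩
  | succ k ih =>
    refine reducesTo_succ (fun s x hx => hx.trans (isConj_iff.2 ⟨s, rfl⟩)) (ih (by lia)) ?_
    rintro p hp r ⟨w, hw, hwr⟩
    obtain ⟨x, hx, rfl⟩ := exists_mem_all_toPerm_eq hp
    exact reducesTo_of_reduces (reduces_cons_reps k (by lia) w hw x hx) (hwr.cons x)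

end DoubleSwap

/-- Any `4`-tuple of order-2 elements of `A₆` is either Hurwitz-equivalent to a
tuple with two entries (at distinct indices) having the same set of fixed
points, or Hurwitz-equivalent to a simultaneous `S₆`-conjugate of the tuple
`((1 2)(3 4), (1 2)(3 5), (1 6)(3 4), (1 6)(4 5))` (written here on
`Fin 6 = {0,…,5}`). -/
theorem stmt_12 (g : Fin 4 → Equiv.Perm (Fin 6))
    (hmem : ∀ i, g i ∈ alternatingGroup (Fin 6))
    (hord : ∀ i, orderOf (g i) = 2) :
    (∃ h : Fin 4 → Equiv.Perm (Fin 6), HurwitzEquiv g h ∧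
        ∃ i j : Fin 4, i ≠ j ∧ FixedPts (h i) = FixedPts (h j)) ∨
    (∃ s : Equiv.Perm (Fin 6), HurwitzEquiv g (fun i =>
        s⁻¹ * (![Equiv.swap 0 1 * Equiv.swap 2 3,
                 Equiv.swap 0 1 * Equiv.swap 2 4,
                 Equiv.swap 0 5 * Equiv.swap 2 3,
                 Equiv.swap 0 5 * Equiv.swap 3 4] i) * s)) := by
  obtain ⟨h, ⟨s, hgh⟩, hcol | ⟨r, hr, hrh⟩⟩ := DoubleSwap.reducesTo_reps 4 le_rfl g fun i =>
    mem_conjugatesOf_of_orderOf_eq_two (hmem i) (hord i)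
  · obtain ⟨i, j, hfix, hij⟩ := Function.not_injective_iff.1 ((collides_conj_iff s).2 hcol)
    exact .inl ⟨_, hgh, i, j, hij, hfix⟩
  · obtain rfl := List.mem_singleton.1 hr
    refine .inr ⟨s⁻¹, ?_⟩
    have htarget : h = ![swap 0 1 * swap 2 3, swap 0 1 * swap 2 4, swap 0 5 * swap 2 3,
        swap 0 5 * swap 3 4] :=
      List.ofFn_injective hrh.symm
    simpa only [htarget, Function.comp_def, MulAut.conj_apply, inv_inv] using hgh
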